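/- arXiv:math/0703050 — 5 statements merged into one kernel-verified Lean document; each statement's English description precedes it below -/
import Mathlib

section
/- Let k ≥ 1 be an integer, let J ≥ 0, and let m_1, …, m_J be integers with m_j ≥ 2 for every j that are pairwise relatively prime (gcd(m_i, m_j) = 1 for i ≠ j). If Σ_{j=1}^J (1 − 1/m_j) = 2 − 3/k as rational numbers, then either k = 2, J = 1 and m_1 = 2, or k = 90, J = 3 and {m_1, m_2, m_3} = {2, 3, 5} as multisets. -/
theorem three_sorted (k a b c : ℕ) (hk : 1 ≤ k) (ha : 2 ≤ a) (hab : a < b) (hbc : b < c)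
    (h2 : Nat.gcd a c = 1)
    (h : 3 * (a * b * c) + k * (a * b * c) = k * (a * b + b * c + a * c)) :
    k = 90 ∧ a = 2 ∧ b = 3 ∧ c = 5 := by
  have hpos : 0 < a * b * c := by
    have : 0 < b := by omega
    have : 0 < c := by omega
    positivity
  have hlt : a * b * c < a * b + b * c + a * c := by
    by_contra hcon
    push Not at hcon
    have := Nat.mul_le_mul_left k hcon
    omega
  have ha2 : a = 2 := by
    by_contra hne
    have h3 : 3 ≤ a := by omega
    have e1 : a * b ≤ b * c := by nlinarith
    have e2 : a * c ≤ b * c := by nlinarith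
    have e3 : 3 * (b * c) ≤ a * (b * c) := Nat.mul_le_mul_right _ h3
    nlinarith
  subst ha2
  have hb3 : b = 3 := by
    by_contra hne
    have h4 : 4 ≤ b := by omega
    nlinarith
  subst hb3
  have hc : c < 6 := by omega
  interval_cases c
  · simp at h2
  · omega

theorem three_any (k a b c : ℕ) (hk : 1 ≤ k) (ha : 2 ≤ a) (hb : 2 ≤ b) (hc : 2 ≤ c)
    (h1 : Nat.gcd a b = 1) (h2 : Nat.gcd a c = 1) (h3 : Nat.gcd b c = 1)
    (h : 3 * (a * b * c) + k * (a * b * c) = k * (a * b + b * c + a * c)) :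
    k = 90 ∧ (↑[a, b, c] : Multiset ℕ) = ({2, 3, 5} : Multiset ℕ) := by
  have n1 : a ≠ b := by rintro rfl; simp at h1; omega
  have n2 : a ≠ c := by rintro rfl; simp at h2; omega
  have n3 : b ≠ c := by rintro rfl; simp at h3; omega
  have g1 := Nat.gcd_comm a b ▸ h1
  have g2 := Nat.gcd_comm a c ▸ h2
  have g3 := Nat.gcd_comm b c ▸ h3
  rcases lt_or_gt_of_ne n1 with l1 | l1 <;> rcases lt_or_gt_of_ne n2 with l2 | l2 <;>
    rcases lt_or_gt_of_ne n3 with l3 | l3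
  · obtain ⟨rfl, rfl, rfl, rfl⟩ := three_sorted k a b c hk ha l1 l3 h2 (by linarith)
    exact ⟨rfl, by decide⟩
  · obtain ⟨rfl, rfl, rfl, rfl⟩ := three_sorted k a c b hk ha l2 l3 h1 (by linarith)
    exact ⟨rfl, by decide⟩
  · omega
  · obtain ⟨rfl, rfl, rfl, rfl⟩ := three_sorted k c a b hk hc l2 l1 g3 (by linarith)
    exact ⟨rfl, by decide⟩
  · obtain ⟨rfl, rfl, rfl, rfl⟩ := three_sorted k b a c hk hb l1 l2 h3 (by linarith)
    exact ⟨rfl, by decide⟩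
  · omega
  · obtain ⟨rfl, rfl, rfl, rfl⟩ := three_sorted k b c a hk hb l3 l2 g1 (by linarith)
    exact ⟨rfl, by decide⟩
  · obtain ⟨rfl, rfl, rfl, rfl⟩ := three_sorted k c b a hk hc l3 l1 g2 (by linarith)
    exact ⟨rfl, by decide⟩

theorem two_any (k a b : ℕ) (ha : 2 ≤ a) (hb : 2 ≤ b) (h1 : Nat.gcd a b = 1)
    (h : k * (a + b) = 3 * (a * b)) : False := by
  have hc : Nat.Coprime (a + b) (a * b) := by
    apply Nat.Coprime.mul_right
    · have : Nat.Coprime b a := (Nat.Coprime.symm h1)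
      simpa using this
    · have : Nat.Coprime a b := h1
      simpa using this
  have hd : a + b ∣ 3 := hc.dvd_of_dvd_mul_right ⟨k, by linarith⟩
  have := Nat.le_of_dvd (by norm_num) hd
  omega

/-- The Diophantine analysis of Section 2: if `k ≥ 1` and `m_1, …, m_J ≥ 2` are
pairwise relatively prime with `Σ (1 - 1/m_j) = 2 - 3/k`, then either
`k = 2, J = 1, m_1 = 2`, or `k = 90, J = 3` and `{m_1, m_2, m_3} = {2, 3, 5}`
as multisets. -/
theorem stmt_2 (k : ℕ) (hk : 1 ≤ k) (J : ℕ) (m : Fin J → ℕ)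
    (hm : ∀ j, 2 ≤ m j)
    (hcop : ∀ i j, i ≠ j → Nat.gcd (m i) (m j) = 1)
    (hsum : ∑ j : Fin J, (1 - 1 / (m j : ℚ)) = 2 - 3 / (k : ℚ)) :
    (k = 2 ∧ J = 1 ∧ ∀ j, m j = 2) ∨
    (k = 90 ∧ J = 3 ∧ (↑(List.ofFn m) : Multiset ℕ) = ({2, 3, 5} : Multiset ℕ)) := by
  have hk0 : (0 : ℚ) < k := by exact_mod_cast hk
  have hm0 : ∀ j, (0 : ℚ) < m j := fun j => by
    have := hm j
    exact_mod_cast (by omega : 0 < m j)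
  have hJ : J < 4 := by
    have h1 : ∑ j : Fin J, (1 / 2 : ℚ) ≤ ∑ j : Fin J, (1 - 1 / (m j : ℚ)) := by
      apply Finset.sum_le_sum
      intro j _
      have h2 : (2 : ℚ) ≤ m j := by exact_mod_cast hm j
      have := one_div_le_one_div_of_le (by norm_num) h2
      linarith
    rw [hsum] at h1
    simp only [Finset.sum_const, Finset.card_univ, Fintype.card_fin, nsmul_eq_mul] at h1
    have h3 : 0 < 3 / (k : ℚ) := by positivity
    have h4 : (J : ℚ) < 4 := by linarith
    exact_mod_cast h4
  have hkn := hk0.ne'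
  interval_cases J
  · exfalso
    simp at hsum
    field_simp at hsum
    have : 2 * k = 3 := by
      have h5 : (2 : ℚ) * k = 3 := by linarith
      exact_mod_cast h5
    omega
  · left
    have h0 := (hm0 0).ne'
    have hm2 := hm 0
    simp only [Fin.sum_univ_one] at hsum
    field_simp at hsum
    have e : k * m 0 + k = 3 * m 0 := by
      have : (k : ℚ) * m 0 + k = 3 * m 0 := by linarith
      exact_mod_cast this
    have hk3 : k < 3 := by
      by_contra hcon
      push Not at hcon
      nlinarith
    have hk2 : k = 2 ∧ m 0 = 2 := by
      interval_cases k <;> omega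
    refine ⟨hk2.1, rfl, fun j => ?_⟩
    rw [Subsingleton.elim j 0]
    exact hk2.2
  · exfalso
    have h0 := (hm0 0).ne'
    have h1 := (hm0 1).ne'
    simp only [Fin.sum_univ_two] at hsum
    field_simp at hsum
    apply two_any k (m 0) (m 1) (hm 0) (hm 1) (hcop 0 1 (by decide))
    have : (k : ℚ) * (m 0 + m 1) = 3 * (m 0 * m 1) := by linarith
    exact_mod_cast this
  · right
    have h0 := (hm0 0).ne'
    have h1 := (hm0 1).ne'
    have h2 := (hm0 2).ne'
    simp only [Fin.sum_univ_three] at hsum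
    field_simp at hsum
    have e := three_any k (m 0) (m 1) (m 2) hk (hm 0) (hm 1) (hm 2) (hcop 0 1 (by decide))
      (hcop 0 2 (by decide)) (hcop 1 2 (by decide)) (by
        have : (3 : ℚ) * (m 0 * m 1 * m 2) + k * (m 0 * m 1 * m 2)
          = k * (m 0 * m 1 + m 1 * m 2 + m 0 * m 2) := by linarith
        exact_mod_cast this)
    refine ⟨e.1, rfl, ?_⟩
    rw [← e.2]
    simp [List.ofFn_succ]
end

section
/- For every pair (s,t) ∈ ℂ² and every point (x,y,z) ∈ ℂ³ satisfying t · x^h y^{k−h} = s · z^k, the point (X, Y, Z) := (x^d, y^d, R(x,y,z)) satisfies t' · X^h Y^{k−h} = s' · Z^k, where s' = s^d and t' = t^{d−kl} · ∏_{i=1}^l (t + c_i s)^k. (This says that f = [x^d : y^d : R] maps the fiber of the binomial pencil over [s:t] into the fiber over g[s:t] = [s^d : t^{d−kl}·∏_{i=1}^l (t + c_i s)^k].) -/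
/-- Case (ii) of the Main Theorem, pointwise: if `t·x^h y^(k-h) = s·z^k`, then the
point `(X, Y, Z) = (x^d, y^d, R(x,y,z))` satisfies `t'·X^h Y^(k-h) = s'·Z^k` with
`s' = s^d` and `t' = t^(d-kl) · ∏ (t + c_i s)^k`; i.e. `f = [x^d : y^d : R]` maps
the fiber of the binomial pencil over `[s:t]` into the fiber over `g[s:t]`. -/
theorem stmt_4 (k h d l : ℕ) (hk : 2 ≤ k) (hh0 : 0 < h) (hhk : h < k)
    (hcop : Nat.gcd h k = 1) (hd : 2 ≤ d) (hld : k * l ≤ d)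
    (c : Fin l → ℂ) (hc : ∀ i, c i ≠ 0)
    (s t x y z : ℂ)
    (hfib : t * (x ^ h * y ^ (k - h)) = s * z ^ k) :
    (t ^ (d - k * l) * ∏ i : Fin l, (t + c i * s) ^ k) *
        ((x ^ d) ^ h * (y ^ d) ^ (k - h)) =
      s ^ d *
        (z ^ (d - k * l) * ∏ i : Fin l, (z ^ k + c i * (x ^ h * y ^ (k - h)))) ^ k := by
  obtain ⟨m, rfl⟩ := Nat.exists_eq_add_of_le hld
  have hm : k * l + m - k * l = m := by omega
  rw [hm]
  have e1 : (x ^ (k * l + m)) ^ h * (y ^ (k * l + m)) ^ (k - h)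
      = (x ^ h * y ^ (k - h)) ^ (k * l + m) := by
    rw [mul_pow, ← pow_mul, ← pow_mul, ← pow_mul, ← pow_mul, mul_comm h,
      mul_comm (k - h)]
  rw [e1]
  generalize x ^ h * y ^ (k - h) = A at hfib ⊢
  have e2 : (∏ i : Fin l, (t + c i * s)) * A ^ l
      = s ^ l * ∏ i : Fin l, (z ^ k + c i * A) := by
    have h1 : ∀ a : ℂ, a ^ l = ∏ _i : Fin l, a := fun a => by simp
    rw [h1 A, h1 s, ← Finset.prod_mul_distrib, ← Finset.prod_mul_distrib]
    refine Finset.prod_congr rfl fun i _ => ?_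
    linear_combination hfib
  rw [Finset.prod_pow]
  calc _ = (t * A) ^ m * ((∏ i : Fin l, (t + c i * s)) * A ^ l) ^ k := by
        rw [mul_pow, mul_pow, pow_add, ← pow_mul A l k, mul_comm l k]; ring
    _ = (s * z ^ k) ^ m * (s ^ l * ∏ i : Fin l, (z ^ k + c i * A)) ^ k := by
        rw [hfib, e2]
    _ = _ := by
        rw [mul_pow, mul_pow, mul_pow, pow_add, ← pow_mul s l k, mul_comm l k,
          ← pow_mul, ← pow_mul, mul_comm k m]; ring
end

section
/- For all nonzero complex numbers s and t, the polynomial s · x^h y^{k−h} + t · z^k is irreducible in ℂ[x,y,z]. (Hence every member of the binomial pencil other than the two distinguished members {x^h y^{k−h} = 0} and {z^k = 0} is an irreducible curve, so the binomial pencil is an irreducible pencil.) -/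
open MvPolynomial

lemma aux_inj {D E : Type*} [CommRing D] [IsDomain D] [CommRing E] [IsDomain E]
    (τ : D →+* E) (hτ : Function.Injective τ) (β : E) (hβ : β ≠ 0) (k h : ℕ) (hk : 0 < k)
    (hcop : Nat.gcd h k = 1) (p : Polynomial (Polynomial D)) (hp : p.natDegree < k)
    (h0 : p.eval₂ ((Polynomial.expand E k : Polynomial E →+* Polynomial E).comp
      (Polynomial.mapRingHom τ)) (Polynomial.C β * Polynomial.X ^ h) = 0) : p = 0 := by
  rw [Polynomial.eval₂_eq_sum_range' _ hp] at h0
  ext j m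
  rw [Polynomial.coeff_zero, Polynomial.coeff_zero]
  by_cases hj : j < k
  swap
  · rw [Polynomial.coeff_eq_zero_of_natDegree_lt (p := p) (by omega), Polynomial.coeff_zero]
  have h1 := congrArg (fun q => Polynomial.coeff q (m * k + h * j)) h0
  simp only [Polynomial.finsetSum_coeff, Polynomial.coeff_zero] at h1
  rw [Finset.sum_eq_single j] at h1
  · rw [mul_pow, ← pow_mul, ← mul_assoc, Polynomial.coeff_mul_X_pow, ← Polynomial.C_pow,
      Polynomial.coeff_mul_C] at h1
    have h2 := (mul_eq_zero.1 h1).resolve_right (pow_ne_zero _ hβ)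
    simp only [RingHom.comp_apply, RingHom.coe_coe, Polynomial.coe_mapRingHom] at h2
    rw [Polynomial.coeff_expand_mul hk, Polynomial.coeff_map] at h2
    exact (map_eq_zero_iff τ hτ).1 h2
  · intro i hi hij
    rw [Finset.mem_range] at hi
    rw [mul_pow, ← pow_mul, ← mul_assoc, Polynomial.coeff_mul_X_pow', ← Polynomial.C_pow]
    split_ifs with hle
    · rw [Polynomial.coeff_mul_C]
      simp only [RingHom.comp_apply, RingHom.coe_coe]
      rw [Polynomial.coeff_expand hk, if_neg, zero_mul]
      intro hd
      apply hij
      have e1 : h * i ≡ m * k + h * j [MOD k] := (Nat.modEq_iff_dvd' hle).2 hd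
      have e2 : m * k + h * j ≡ h * j [MOD k] := by
        simp [Nat.ModEq]
      have e3 := Nat.ModEq.cancel_left_of_coprime (by rwa [Nat.gcd_comm]) (e1.trans e2)
      exact Nat.ModEq.eq_of_lt_of_lt e3 hi hj
    · rfl
  · intro hn
    exact absurd (Finset.mem_range.2 hj) hn

lemma aux_irr {D E : Type*} [CommRing D] [IsDomain D] [CommRing E] [IsDomain E]
    (τ : D →+* E) (hτ : Function.Injective τ) (β : E) (hβ : β ≠ 0) (k h : ℕ) (hk : 0 < k)
    (hcop : Nat.gcd h k = 1) (α : D) (hα : τ α = β ^ k) :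
    Irreducible (Polynomial.X ^ k - Polynomial.C (Polynomial.C α * Polynomial.X ^ h) :
      Polynomial (Polynomial D)) := by
  have hm := Polynomial.monic_X_pow_sub_C (Polynomial.C α * Polynomial.X ^ h) hk.ne'
  have hd := Polynomial.natDegree_X_pow_sub_C (n := k) (r := Polynomial.C α * Polynomial.X ^ h)
  rw [hm.irreducible_iff_natDegree]
  constructor
  · intro h1
    rw [h1, Polynomial.natDegree_one] at hd
    omega
  intro f g hf hg hfg
  by_contra! hcon
  have hs : f.natDegree + g.natDegree = k := by
    rw [← hf.natDegree_mul hg, hfg, hd]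
  have hz : (f * g).eval₂ ((Polynomial.expand E k : Polynomial E →+* Polynomial E).comp
      (Polynomial.mapRingHom τ)) (Polynomial.C β * Polynomial.X ^ h) = 0 := by
    rw [hfg, Polynomial.eval₂_sub, Polynomial.eval₂_C, Polynomial.eval₂_pow, Polynomial.eval₂_X]
    simp [hα, mul_pow]
    ring
  rw [Polynomial.eval₂_mul] at hz
  rcases mul_eq_zero.1 hz with hz | hz
  · exact hf.ne_zero (aux_inj τ hτ β hβ k h hk hcop f (by omega) hz)
  · exact hg.ne_zero (aux_inj τ hτ β hβ k h hk hcop g (by omega) hz)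

/-- Irreducibility of the generic member of the binomial pencil: for `0 < h < k`
with `gcd(h,k) = 1` and nonzero `s, t ∈ ℂ`, the polynomial
`s·x^h y^(k-h) + t·z^k` is irreducible in `ℂ[x,y,z]`. -/
theorem stmt_5 (k h : ℕ) (hk : 2 ≤ k) (hh0 : 0 < h) (hhk : h < k)
    (hcop : Nat.gcd h k = 1) (s t : ℂ) (hs : s ≠ 0) (ht : t ≠ 0) :
    Irreducible
      (C s * (X 0 ^ h * X 1 ^ (k - h)) + C t * X 2 ^ k :
        MvPolynomial (Fin 3) ℂ) := by
  obtain ⟨c, hc⟩ := IsAlgClosed.exists_pow_nat_eq (-s / t) (show 0 < k by omega)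
  have hc0 : c ≠ 0 := by
    rintro rfl
    rw [zero_pow (by omega)] at hc
    exact div_ne_zero (neg_ne_zero.2 hs) ht hc.symm
  have key := aux_irr
    (MvPolynomial.expand k : MvPolynomial (Fin 1) ℂ →ₐ[ℂ] MvPolynomial (Fin 1) ℂ).toRingHom
    (MvPolynomial.expand_injective (by omega)) (C c * X 0 ^ (k - h))
    (mul_ne_zero (by simpa using hc0) (pow_ne_zero _ (X_ne_zero _))) k h (by omega) hcop
    (C (-s / t) * X 0 ^ (k - h))
    (by simp [← hc, mul_pow, ← pow_mul, mul_comm])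
  let e := ((renameEquiv ℂ (finRotate 3)).toRingEquiv.trans
    (finSuccEquiv ℂ 2).toRingEquiv).trans (Polynomial.mapEquiv (finSuccEquiv ℂ 1).toRingEquiv)
  rw [← MulEquiv.irreducible_iff e]
  have hu : IsUnit (Polynomial.C (Polynomial.C (C t)) :
      Polynomial (Polynomial (MvPolynomial (Fin 1) ℂ))) :=
    (((IsUnit.mk0 t ht).map C).map Polynomial.C).map Polynomial.C
  rw [← irreducible_isUnit_mul hu] at key
  convert key using 1
  have r0 : finRotate 3 0 = (0 : Fin 2).succ := rfl
  have r1 : finRotate 3 1 = (1 : Fin 2).succ := rfl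
  have r2 : finRotate 3 2 = 0 := rfl
  have he (p : MvPolynomial (Fin 3) ℂ) : e p = Polynomial.map
      (finSuccEquiv ℂ 1 : MvPolynomial (Fin 2) ℂ →+* Polynomial (MvPolynomial (Fin 1) ℂ))
      (finSuccEquiv ℂ 2 (rename (finRotate 3) p)) := rfl
  have e0 : e (X 0) = Polynomial.C Polynomial.X := by
    rw [he, rename_X, r0, finSuccEquiv_X_succ, Polynomial.map_C]
    exact congrArg _ finSuccEquiv_X_zero
  have e1 : e (X 1) = Polynomial.C (Polynomial.C (X 0)) := by
    rw [he, rename_X, r1, finSuccEquiv_X_succ, Polynomial.map_C]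
    exact congrArg _ (finSuccEquiv_X_succ (j := (0 : Fin 1)))
  have e2 : e (X 2) = Polynomial.X := by
    rw [he, rename_X, r2, finSuccEquiv_X_zero, Polynomial.map_X]
  have eC (a : ℂ) : e (C a) = Polynomial.C (Polynomial.C (C a)) := by
    simp [e, finSuccEquiv_apply]
  have hst : (C s : MvPolynomial (Fin 1) ℂ) = - (C t * C (-s / t)) := by
    rw [← C_mul, ← C_neg]
    congr 1
    field_simp
  simp only [map_add, map_mul, map_pow, e0, e1, e2, eC]
  rw [hst]
  simp only [map_neg, map_mul]
  ring
end

section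
/- Let k ≥ 1 and let A, B ∈ ℂ[x,y,z] be homogeneous polynomials of degree k with no common non-unit divisor. Let C_1, …, C_n ∈ ℂ[x,y,z] be non-constant polynomials that are pairwise without common non-unit divisor, and let m_1, …, m_n ≥ 1 be integers such that for each i there exists (s_i, t_i) ∈ ℂ² ∖ {(0,0)} with C_i^{m_i} dividing s_i·A + t_i·B. Then Σ_{i=1}^n (m_i − 1) · deg C_i ≤ 2k − 2, where deg denotes total degree. -/
open MvPolynomial

lemma aux_pderiv_dvd {F D : MvPolynomial (Fin 3) ℂ} {m : ℕ} (h : D ^ m ∣ F) (i : Fin 3) :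
    D ^ (m - 1) ∣ pderiv i F := by
  obtain ⟨G, rfl⟩ := h
  rw [pderiv_mul, pderiv_pow]
  refine dvd_add ?_ ?_
  · exact Dvd.dvd.mul_right (Dvd.dvd.mul_right (Dvd.intro_left _ rfl) _) _
  · exact Dvd.dvd.mul_right (pow_dvd_pow _ (Nat.sub_le _ _)) _

lemma aux_C_dvd {D J : MvPolynomial (Fin 3) ℂ} {t : ℂ} (ht : t ≠ 0) (h : D ∣ C t * J) :
    D ∣ J := by
  have h2 : J = C t⁻¹ * (C t * J) := by
    rw [← mul_assoc, ← C_mul, inv_mul_cancel₀ ht, C_1, one_mul]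
  rw [h2]
  exact Dvd.dvd.mul_left h _

lemma aux_jac_dvd {A B D : MvPolynomial (Fin 3) ℂ} {m : ℕ} {s t : ℂ} (hst : (s, t) ≠ (0, 0))
    (h : D ^ m ∣ C s * A + C t * B) (i j : Fin 3) :
    D ^ (m - 1) ∣ pderiv i A * pderiv j B - pderiv j A * pderiv i B := by
  have hi := aux_pderiv_dvd h i
  have hj := aux_pderiv_dvd h j
  rw [map_add, pderiv_C_mul, pderiv_C_mul] at hi hj
  by_cases ht : t = 0
  · have hs : s ≠ 0 := by
      rintro rfl
      exact hst (by rw [ht])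
    apply aux_C_dvd hs
    have := dvd_sub (Dvd.dvd.mul_right hi (pderiv j B)) (Dvd.dvd.mul_right hj (pderiv i B))
    convert this using 1
    ring
  · apply aux_C_dvd ht
    have := dvd_sub (Dvd.dvd.mul_right hj (pderiv i A)) (Dvd.dvd.mul_right hi (pderiv j A))
    convert this using 1
    ring

lemma aux_eq_zero {k : ℕ} (hk : 1 ≤ k) {A : MvPolynomial (Fin 3) ℂ} (hA : A.IsHomogeneous k)
    (h : ∀ j, A ∣ pderiv j A) : A = 0 := by
  by_contra hA0
  have h0 : ∀ j, pderiv j A = 0 := by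
    intro j
    by_contra hj
    have h1 := totalDegree_le_of_dvd_of_isDomain (h j) hj
    rw [hA.totalDegree hA0] at h1
    have h2 := (hA.pderiv (i := j)).totalDegree_le
    omega
  have h3 := hA.sum_X_mul_pderiv
  simp only [h0, mul_zero, Finset.sum_const_zero] at h3
  rcases smul_eq_zero.mp h3.symm with h4 | h4
  · omega
  · exact hA0 h4

lemma aux_jac_ne {k : ℕ} (hk : 1 ≤ k) {A B : MvPolynomial (Fin 3) ℂ}
    (hA : A.IsHomogeneous k) (hB : B.IsHomogeneous k) (hAB : IsRelPrime A B) :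
    ∃ i j, pderiv i A * pderiv j B - pderiv j A * pderiv i B ≠ 0 := by
  by_contra! h
  have key : ∀ j, A * pderiv j B = pderiv j A * B := by
    intro j
    have e1 := hA.sum_X_mul_pderiv
    have e2 := hB.sum_X_mul_pderiv
    have e3 : (k • A) * pderiv j B - pderiv j A * (k • B) = 0 := by
      rw [← e1, ← e2, Finset.sum_mul, Finset.mul_sum, ← Finset.sum_sub_distrib]
      refine Finset.sum_eq_zero fun i _ => ?_
      linear_combination X i * h i j
    rw [smul_mul_assoc, mul_smul_comm, ← smul_sub] at e3
    rcases smul_eq_zero.mp e3 with h4 | h4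
    · omega
    · exact sub_eq_zero.mp h4
  have a0 : A = 0 := aux_eq_zero hk hA fun j =>
    hAB.dvd_of_dvd_mul_right (Dvd.intro _ (key j))
  have b0 : B = 0 := aux_eq_zero hk hB fun j =>
    hAB.symm.dvd_of_dvd_mul_left (Dvd.intro_left _ (key j).symm)
  subst a0 b0
  exact not_isUnit_zero (hAB dvd_rfl dvd_rfl)

lemma aux_deg_pow {D : MvPolynomial (Fin 3) ℂ} (hD : D ≠ 0) (e : ℕ) :
    (D ^ e).totalDegree = e * D.totalDegree := by
  induction e with
  | zero => simp
  | succ e ih =>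
    rw [pow_succ, totalDegree_mul_of_isDomain (pow_ne_zero _ hD) hD, ih]
    ring

lemma aux_deg_prod {ι : Type*} (s : Finset ι) (f : ι → MvPolynomial (Fin 3) ℂ)
    (hf : ∀ i, f i ≠ 0) :
    (∏ i ∈ s, f i).totalDegree = ∑ i ∈ s, (f i).totalDegree := by
  classical
  induction s using Finset.induction_on with
  | empty => simp
  | insert a s ha ih =>
    rw [Finset.prod_insert ha, Finset.sum_insert ha,
      totalDegree_mul_of_isDomain (hf a) (Finset.prod_ne_zero_iff.mpr fun i _ => hf i), ih]

/-- Lemma 1, inequality, in divisor-free form: for a pencil `π = [A : B]` of plane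
curves of degree `k` without fixed component, the ramification divisor has degree
at most `2k - 2`: if `C_i^(m_i)` divides some member `s_i·A + t_i·B`, with the `C_i`
non-constant and pairwise coprime, then `Σ (m_i - 1)·deg C_i ≤ 2k - 2`. -/
theorem stmt_9 (k : ℕ) (hk : 1 ≤ k) (A B : MvPolynomial (Fin 3) ℂ)
    (hA : A.IsHomogeneous k) (hB : B.IsHomogeneous k) (hAB : IsRelPrime A B)
    (n : ℕ) (Cc : Fin n → MvPolynomial (Fin 3) ℂ)
    (hCdeg : ∀ i, 0 < (Cc i).totalDegree)
    (hCcop : ∀ i j, i ≠ j → IsRelPrime (Cc i) (Cc j))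
    (m : Fin n → ℕ) (hm : ∀ i, 1 ≤ m i)
    (hdiv : ∀ i, ∃ s t : ℂ, (s, t) ≠ (0, 0) ∧
      Cc i ^ m i ∣ (C s * A + C t * B)) :
    ∑ i : Fin n, (m i - 1) * (Cc i).totalDegree ≤ 2 * k - 2 := by
  have hC0 : ∀ i, Cc i ≠ 0 := by
    intro i h0
    have := hCdeg i
    rw [h0, totalDegree_zero] at this
    exact lt_irrefl _ this
  obtain ⟨p, q, hJ⟩ := aux_jac_ne hk hA hB hAB
  have hd : (∏ i, Cc i ^ (m i - 1)) ∣ pderiv p A * pderiv q B - pderiv q A * pderiv p B := by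
    apply Fintype.prod_dvd_of_isRelPrime
    · intro i j hij
      exact (hCcop i j hij).pow
    · intro i
      obtain ⟨s, t, hst, h⟩ := hdiv i
      exact aux_jac_dvd hst h p q
  have h1 := totalDegree_le_of_dvd_of_isDomain hd hJ
  rw [aux_deg_prod _ _ fun i => pow_ne_zero _ (hC0 i)] at h1
  simp only [aux_deg_pow (hC0 _)] at h1
  have h2 := ((hA.pderiv (i := p)).mul (hB.pderiv (i := q))).sub
    ((hA.pderiv (i := q)).mul (hB.pderiv (i := p)))
  have h3 := h2.totalDegree_le
  omega
end

section
/- Let k ≥ 2 and let A, B ∈ ℂ[x,y,z] be homogeneous polynomials of degree k with no common non-unit divisor, and assume there are infinitely many pairwise non-proportional pairs (s,t) ∈ ℂ² ∖ {(0,0)} for which s·A + t·B is irreducible in ℂ[x,y,z]. Let C_1, …, C_n ∈ ℂ[x,y,z] be non-constant polynomials that are pairwise without common non-unit divisor, and let m_1, …, m_n ≥ 1 be integers such that for each i there exists (s_i, t_i) ∈ ℂ² ∖ {(0,0)} with C_i^{m_i} dividing s_i·A + t_i·B. Then Σ_{i=1}^n (m_i − 1) · deg C_i ≤ 2k − 3,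 where deg denotes total degree. -/
open MvPolynomial

/-- Euler-type scaling of a homogeneous polynomial under algebra evaluation. -/
lemma aeval_scale {S : Type*} [CommRing S] [Algebra ℂ S] {k : ℕ}
    {F : MvPolynomial (Fin 3) ℂ} (hF : F.IsHomogeneous k) (h : S) (v : Fin 3 → S) :
    aeval (fun m => h * v m) F = h ^ k * aeval v F := by
  rw [aeval_def, aeval_def, eval₂_eq', eval₂_eq', Finset.mul_sum]
  refine Finset.sum_congr rfl fun d hd => ?_
  have hdeg : ∑ i, d i = k := by
    have := hF.degree_eq_sum_deg_support hd
    rw [this]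
    exact (Finset.sum_subset (Finset.subset_univ _) fun x _ hx => by simpa using hx).symm
  simp only [mul_pow, Finset.prod_mul_distrib, Finset.prod_pow_eq_pow_sum, hdeg]
  ring

/-- Chain rule along a line. -/
lemma derivative_line (p c : Fin 3 → ℂ) (F : MvPolynomial (Fin 3) ℂ) :
    Polynomial.derivative
      (aeval (fun m => Polynomial.C (p m) + Polynomial.C (c m) * Polynomial.X) F)
    = aeval (fun m => Polynomial.C (p m) + Polynomial.C (c m) * Polynomial.X)
        (∑ m, C (c m) * pderiv m F) := by
  induction F using MvPolynomial.induction_on with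
  | C a => simp [Polynomial.algebraMap_eq]
  | add f g hf hg =>
    simp only [map_add, hf, hg, mul_add, Finset.sum_add_distrib]
  | mul_X f i hf =>
    have key : ∑ m, C (c m) * pderiv m (f * X i)
        = (∑ m, C (c m) * pderiv m f) * X i + f * C (c i) := by
      have h1 : ∑ m, C (c m) * (f * pderiv m (X i)) = f * C (c i) := by
        rw [Finset.sum_eq_single i]
        · rw [pderiv_X_self]; ring
        · intro b _ hb
          rw [pderiv_X_of_ne (Ne.symm hb)]; ring
        · intro h; exact absurd (Finset.mem_univ i) h
      rw [← h1, Finset.sum_mul, ← Finset.sum_add_distrib]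
      refine Finset.sum_congr rfl fun m _ => ?_
      rw [pderiv_mul]; ring
    rw [key, map_add, map_mul (aeval _) f (X i), map_mul (aeval _) _ (X i),
      map_mul (aeval _) f (C (c i)), Polynomial.derivative_mul, hf,
      aeval_X, aeval_C]
    simp [Polynomial.algebraMap_eq]

lemma eval_line (p c : Fin 3 → ℂ) (F : MvPolynomial (Fin 3) ℂ) (t : ℂ) :
    Polynomial.eval t
      (aeval (fun m => Polynomial.C (p m) + Polynomial.C (c m) * Polynomial.X) F)
    = eval (fun m => p m + c m * t) F := by
  induction F using MvPolynomial.induction_on with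
  | C a => simp [Polynomial.algebraMap_eq]
  | add f g hf hg => simp only [map_add, Polynomial.eval_add, hf, hg]
  | mul_X f i hf => simp [map_mul, Polynomial.eval_mul, hf]

lemma translate_inv (c : Fin 3 → ℂ) (F : MvPolynomial (Fin 3) ℂ)
    (h : ∑ m, C (c m) * pderiv m F = 0) (p : Fin 3 → ℂ) (t : ℂ) :
    eval (fun m => p m + c m * t) F = eval p F := by
  have h1 := derivative_line p c F
  rw [h, map_zero] at h1
  have h2 := Polynomial.derivative_eq_zero.1 h1
  rw [Polynomial.natDegree_eq_zero] at h2
  obtain ⟨a, ha⟩ := h2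
  have e1 := eval_line p c F t
  have e2 := eval_line p c F 0
  rw [← ha] at e1 e2
  simp only [Polynomial.eval_C, mul_zero, add_zero] at e1 e2
  rw [← e1, e2]

/-- A polynomial function on an affine line without zeros is constant. -/
lemma line_const (p c : Fin 3 → ℂ) (F : MvPolynomial (Fin 3) ℂ)
    (h : ∀ t : ℂ, eval (fun m => p m + c m * t) F ≠ 0) :
    ∃ a : ℂ, ∀ t : ℂ, eval (fun m => p m + c m * t) F = a := by
  set P := aeval (fun m => Polynomial.C (p m) + Polynomial.C (c m) * Polynomial.X) F with hP
  by_cases hd : P.degree = 0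
  · refine ⟨P.coeff 0, fun t => ?_⟩
    rw [← eval_line p c F t, ← hP, Polynomial.eq_C_of_degree_eq_zero hd]
    simp
  · obtain ⟨t, ht⟩ := IsAlgClosed.exists_root P hd
    exact absurd ((eval_line p c F t).symm.trans ht) (h t)

/-- A binary form of positive degree has a nontrivial zero. -/
lemma exists_zero {k : ℕ} (hk : 1 ≤ k) {F : MvPolynomial (Fin 3) ℂ}
    (hF : F.IsHomogeneous k) (u v : Fin 3 → ℂ) :
    ∃ α β : ℂ, (α ≠ 0 ∨ β ≠ 0) ∧ eval (fun m => α * u m + β * v m) F = 0 := by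
  by_contra! hcon
  obtain ⟨a, ha⟩ := line_const u v F fun t => by
    have := hcon 1 t (Or.inl one_ne_zero)
    simpa [mul_comm] using this
  obtain ⟨b, hb⟩ := line_const v u F fun t => by
    have := hcon t 1 (Or.inr one_ne_zero)
    simpa [mul_comm, add_comm] using this
  have hab : a = b := by
    rw [← ha 1, ← hb 1]; simp [add_comm]
  have h2 : a = 2 ^ k * b := by
    rw [← ha 2, ← hb (1/2)]
    have := aeval_scale hF (2 : ℂ) (fun m => v m + u m * (1/2))
    simp only [aeval_eq_eval] at this
    rw [← this]
    congr 1
    congr 1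
    ext m; ring
  have ha0 : a ≠ 0 := by
    rw [← ha 0]
    simpa using hcon 1 0 (Or.inl one_ne_zero)
  rw [← hab] at h2
  have h3 : (2 : ℂ) ^ k = 1 := by
    have : (2 ^ k - 1) * a = 0 := by rw [sub_mul, ← h2]; ring
    rcases mul_eq_zero.1 this with h | h
    · exact sub_eq_zero.1 h
    · exact absurd h ha0
  have h4 : (2 : ℕ) ^ k = 1 := by exact_mod_cast h3
  have := Nat.one_lt_two_pow (n := k) (by omega)
  omega

lemma fin3_cover (i m : Fin 3) : m = i ∨ m = i + 1 ∨ m = i + 2 := by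
  revert i m; decide

lemma fin3_n1 (i : Fin 3) : i ≠ i + 1 := by revert i; decide

lemma fin3_n2 (i : Fin 3) : i ≠ i + 2 := by revert i; decide

lemma fin3_n3 (i : Fin 3) : i + 1 ≠ i + 2 := by revert i; decide

/-- A form of degree at least 2 killed by a constant vector field is reducible. -/
lemma not_irreducible_of_killed {k : ℕ} (hk : 2 ≤ k) {F : MvPolynomial (Fin 3) ℂ}
    (hF : F.IsHomogeneous k) (c : Fin 3 → ℂ) (hc : c ≠ 0)
    (h : ∑ m, C (c m) * pderiv m F = 0) : ¬ Irreducible F := by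
  intro hirr
  obtain ⟨i, hi⟩ := Function.ne_iff.1 hc
  simp only [Pi.zero_apply] at hi
  let w : Fin 3 → MvPolynomial (Fin 3) ℂ := fun m => X m - C (c m / c i) * X i
  have hFw : F = aeval w F := by
    apply MvPolynomial.funext
    intro p
    have e : eval p (aeval w F) = eval (fun m => eval p (w m)) F := by
      rw [aeval_def, algebraMap_eq, eval_eval₂]
      have : (eval p).comp (C : ℂ →+* MvPolynomial (Fin 3) ℂ) = RingHom.id ℂ := by
        ext; simp
      rw [this]; rfl
    rw [e, ← translate_inv c F h p (-(p i / c i))]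
    congr 1
    congr 1
    ext m
    simp [w]
    ring
  have hwi : w i = 0 := by simp [w, hi]
  obtain ⟨α, β, hαβ, h0⟩ := exists_zero (by omega) hF
    (Pi.single (i+1) (1:ℂ)) (Pi.single (i+2) (1:ℂ))
  let ℓ : MvPolynomial (Fin 3) ℂ := C β * w (i+1) - C α * w (i+2)
  set d : Fin 3 → ℂ := fun m => α * (Pi.single (i+1) (1:ℂ) : Fin 3 → ℂ) m
    + β * (Pi.single (i+2) (1:ℂ) : Fin 3 → ℂ) m with hd
  have n1 : i ≠ i + 1 := fin3_n1 i
  have n2 : i ≠ i + 2 := fin3_n2 i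
  have n3 : i + 1 ≠ i + 2 := fin3_n3 i
  have di : d i = 0 := by simp [hd, n1, n2]
  have d1 : d (i+1) = α := by simp [hd, n3]
  have d2 : d (i+2) = β := by simp [hd, n3.symm]
  have hdvd : ℓ ∣ F := by
    rw [← Ideal.mem_span_singleton, ← Ideal.Quotient.eq_zero_iff_mem]
    let q := Ideal.Quotient.mkₐ ℂ (Ideal.span {ℓ})
    change q F = 0
    have hℓ : q ℓ = 0 := Ideal.Quotient.eq_zero_iff_mem.2 (Ideal.mem_span_singleton_self ℓ)
    have hrel : q (C β) * q (w (i+1)) = q (C α) * q (w (i+2)) := by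
      rw [← sub_eq_zero, ← map_mul, ← map_mul, ← map_sub]; exact hℓ
    obtain ⟨g, hg⟩ : ∃ g, ∀ m, q (w m) = g * q (C (d m)) := by
      rcases hαβ with hα | hβ
      · refine ⟨q (C α⁻¹) * q (w (i+1)), fun m => ?_⟩
        have hu : q (C α⁻¹) * q (C α) = 1 := by
          rw [← map_mul, ← C_mul, inv_mul_cancel₀ hα, C_1, map_one]
        rcases fin3_cover i m with rfl | rfl | rfl
        · rw [hwi, di]; simp
        · rw [d1]; linear_combination (- q (w (i+1))) * hu
        · rw [d2]; linear_combination (- q (w (i+2))) * hu - q (C α⁻¹) * hrel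
      · refine ⟨q (C β⁻¹) * q (w (i+2)), fun m => ?_⟩
        have hu : q (C β⁻¹) * q (C β) = 1 := by
          rw [← map_mul, ← C_mul, inv_mul_cancel₀ hβ, C_1, map_one]
        rcases fin3_cover i m with rfl | rfl | rfl
        · rw [hwi, di]; simp
        · rw [d1]; linear_combination (- q (w (i+1))) * hu + q (C β⁻¹) * hrel
        · rw [d2]; linear_combination (- q (w (i+2))) * hu
    have e1 : q F = aeval (fun m => q (w m)) F := by
      conv_lhs => rw [hFw]
      rw [← comp_aeval_apply]
    have e2 : aeval (fun m => q (C (d m))) F = 0 := by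
      have : ∀ m, q (C (d m)) = algebraMap ℂ _ (d m) := fun m => by
        rw [← algebraMap_eq]; exact q.commutes _
      simp only [this]
      have h5 := aeval_algebraMap_apply (A := ℂ) (MvPolynomial (Fin 3) ℂ ⧸ Ideal.span {ℓ}) d F
      simp only [Function.comp_def] at h5
      rw [h5]
      have : aeval d F = 0 := h0
      rw [this, map_zero]
    rw [e1]
    simp only [hg]
    rw [aeval_scale hF, e2, mul_zero]
  have hwh : ∀ m, (w m).IsHomogeneous 1 := fun m =>
    (isHomogeneous_X _ _).sub (isHomogeneous_C_mul_X _ _)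
  have hℓh : ℓ.IsHomogeneous 1 := ((hwh _).C_mul _).sub ((hwh _).C_mul _)
  obtain ⟨g, hg⟩ := hdvd
  have hF0 := hirr.ne_zero
  have hdF := hF.totalDegree hF0
  have hℓ0 : ℓ ≠ 0 := by rintro h; rw [h, zero_mul] at hg; exact hF0 hg
  have hg0 : g ≠ 0 := by rintro h; rw [h, mul_zero] at hg; exact hF0 hg
  have hdeg := totalDegree_mul_of_isDomain hℓ0 hg0
  rw [← hg, hdF, hℓh.totalDegree hℓ0] at hdeg
  rcases hirr.isUnit_or_isUnit hg with hu | hu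
  · have := (isUnit_iff_totalDegree_of_isReduced.1 hu).2
    rw [hℓh.totalDegree hℓ0] at this
    omega
  · have := (isUnit_iff_totalDegree_of_isReduced.1 hu).2
    omega

/-- The Jacobian minors of a pair of polynomials. -/
noncomputable def jmin (A B : MvPolynomial (Fin 3) ℂ) (a b : Fin 3) : MvPolynomial (Fin 3) ℂ :=
  pderiv a A * pderiv b B - pderiv b A * pderiv a B

lemma jmin_dvd (A B D : MvPolynomial (Fin 3) ℂ) (m : ℕ) (s t : ℂ) (hst : (s, t) ≠ (0, 0))
    (h : D ^ m ∣ C s * A + C t * B) (a b : Fin 3) : D ^ (m - 1) ∣ jmin A B a b := by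
  have hd : ∀ a, D ^ (m - 1) ∣ C s * pderiv a A + C t * pderiv a B := by
    intro a
    obtain ⟨G, hG⟩ := h
    have : C s * pderiv a A + C t * pderiv a B = pderiv a (D ^ m * G) := by
      rw [← hG, map_add, pderiv_C_mul, pderiv_C_mul]
    rw [this, pderiv_mul, pderiv_pow]
    refine dvd_add ?_ ?_
    · exact Dvd.dvd.mul_right (Dvd.dvd.mul_right (Dvd.dvd.mul_left dvd_rfl _) _) _
    · exact Dvd.dvd.mul_right (pow_dvd_pow _ (by omega)) _
  have hs : D ^ (m - 1) ∣ C s * jmin A B a b := by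
    have : C s * jmin A B a b = (C s * pderiv a A + C t * pderiv a B) * pderiv b B
      - (C s * pderiv b A + C t * pderiv b B) * pderiv a B := by rw [jmin]; ring
    rw [this]
    exact dvd_sub ((hd a).mul_right _) ((hd b).mul_right _)
  have ht : D ^ (m - 1) ∣ C t * jmin A B a b := by
    have : C t * jmin A B a b = (C s * pderiv b A + C t * pderiv b B) * pderiv a A
      - (C s * pderiv a A + C t * pderiv a B) * pderiv b A := by rw [jmin]; ring
    rw [this]
    exact dvd_sub ((hd b).mul_right _) ((hd a).mul_right _)
  have key : ∀ r : ℂ, r ≠ 0 → D ^ (m - 1) ∣ C r * jmin A B a b → D ^ (m - 1) ∣ jmin A B a b := by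
    intro r hr h
    have : jmin A B a b = C r⁻¹ * (C r * jmin A B a b) := by
      rw [← mul_assoc, ← C_mul, inv_mul_cancel₀ hr, C_1, one_mul]
    rw [this]
    exact h.mul_left _
  by_cases h0 : s = 0
  · refine key t ?_ ht
    rintro rfl
    exact hst (by rw [h0])
  · exact key s h0 hs

lemma jmin_swap (A B : MvPolynomial (Fin 3) ℂ) (a b : Fin 3) :
    jmin A B a b = - jmin A B b a := by
  rw [jmin, jmin, neg_sub]

lemma jmin_all_zero {A B : MvPolynomial (Fin 3) ℂ} (h0 : jmin A B 1 2 = 0)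
    (h1 : jmin A B 2 0 = 0) (h2 : jmin A B 0 1 = 0) : ∀ a b, jmin A B a b = 0
  | 0, 0 => sub_self _
  | 1, 1 => sub_self _
  | 2, 2 => sub_self _
  | 1, 2 => h0
  | 2, 0 => h1
  | 0, 1 => h2
  | 2, 1 => by rw [jmin_swap, h0, neg_zero]
  | 0, 2 => by rw [jmin_swap, h1, neg_zero]
  | 1, 0 => by rw [jmin_swap, h2, neg_zero]

lemma jmin_ne_zero {k : ℕ} (hk : 2 ≤ k) {A B : MvPolynomial (Fin 3) ℂ}
    (hA : A.IsHomogeneous k) (hB : B.IsHomogeneous k) (hAB : IsRelPrime A B) :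
    ∃ a b, jmin A B a b ≠ 0 := by
  by_contra! hz
  have hA0 : A ≠ 0 := by
    rintro rfl
    have hu : IsUnit B := hAB (dvd_zero B) dvd_rfl
    have := (isUnit_iff_totalDegree_of_isReduced.1 hu).2
    rw [hB.totalDegree hu.ne_zero] at this
    omega
  have hk0 : (k : MvPolynomial (Fin 3) ℂ) ≠ 0 := by
    exact_mod_cast (by omega : k ≠ 0)
  have eA := hA.sum_X_mul_pderiv
  have eB := hB.sum_X_mul_pderiv
  rw [nsmul_eq_mul] at eA eB
  have hd : ∀ b, pderiv b A = 0 := by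
    intro b
    have e : A * pderiv b B = B * pderiv b A := by
      apply mul_left_cancel₀ hk0
      rw [← mul_assoc, ← mul_assoc, ← eA, ← eB, Finset.sum_mul, Finset.sum_mul]
      refine Finset.sum_congr rfl fun a _ => ?_
      have := hz a b
      rw [jmin] at this
      linear_combination (X a) * this
    have hdv : A ∣ pderiv b A := hAB.dvd_of_dvd_mul_left ⟨_, e.symm⟩
    by_contra hne
    have h1 := totalDegree_le_of_dvd_of_isDomain hdv hne
    have h2 := (hA.pderiv (i := b)).totalDegree hne
    have h3 := hA.totalDegree hA0
    omega
  simp only [hd, mul_zero, Finset.sum_const_zero] at eA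
  exact (mul_ne_zero hk0 hA0) eA.symm

/-- Lemma 1 with its equality case, in divisor-free form: for an *irreducible*
pencil `π = [A : B]` of plane curves of degree `k ≥ 2` (infinitely many pairwise
non-proportional members `s·A + t·B` are irreducible), the ramification divisor
has degree at most `2k - 3`: if `C_i^(m_i)` divides some member `s_i·A + t_i·B`,
with the `C_i` non-constant and pairwise coprime, then
`Σ (m_i - 1)·deg C_i ≤ 2k - 3`. -/
theorem stmt_10 (k : ℕ) (hk : 2 ≤ k) (A B : MvPolynomial (Fin 3) ℂ)
    (hA : A.IsHomogeneous k) (hB : B.IsHomogeneous k) (hAB : IsRelPrime A B)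
    (hirr : ∃ S : Set (ℂ × ℂ), S.Infinite ∧
      (∀ p ∈ S, p ≠ (0, 0) ∧ Irreducible (C p.1 * A + C p.2 * B)) ∧
      (∀ p ∈ S, ∀ q ∈ S, p ≠ q → p.1 * q.2 ≠ p.2 * q.1))
    (n : ℕ) (Cc : Fin n → MvPolynomial (Fin 3) ℂ)
    (hCdeg : ∀ i, 0 < (Cc i).totalDegree)
    (hCcop : ∀ i j, i ≠ j → IsRelPrime (Cc i) (Cc j))
    (m : Fin n → ℕ) (hm : ∀ i, 1 ≤ m i)
    (hdiv : ∀ i, ∃ s t : ℂ, (s, t) ≠ (0, 0) ∧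
      Cc i ^ m i ∣ (C s * A + C t * B)) :
    ∑ i : Fin n, (m i - 1) * (Cc i).totalDegree ≤ 2 * k - 3 := by
  classical
  by_contra! hcon
  set R := ∏ i, Cc i ^ (m i - 1) with hR
  have hC0 : ∀ i, Cc i ≠ 0 := fun i h => by
    have := hCdeg i
    rw [h, totalDegree_zero] at this
    omega
  have hR0 : R ≠ 0 := Finset.prod_ne_zero_iff.2 fun i _ => pow_ne_zero _ (hC0 i)
  have hRdeg : R.totalDegree = ∑ i : Fin n, (m i - 1) * (Cc i).totalDegree := by
    have hp : ∀ (f : MvPolynomial (Fin 3) ℂ), f ≠ 0 → ∀ e, (f ^ e).totalDegree = e * f.totalDegree := by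
      intro f hf e
      induction e with
      | zero => simp
      | succ e ih => rw [pow_succ, totalDegree_mul_of_isDomain (pow_ne_zero _ hf) hf, ih]; ring
    have hs : ∀ s : Finset (Fin n), (∏ i ∈ s, Cc i ^ (m i - 1)).totalDegree
        = ∑ i ∈ s, (m i - 1) * (Cc i).totalDegree := by
      intro s
      induction s using Finset.induction_on with
      | empty => simp
      | insert a s ha ih =>
        rw [Finset.prod_insert ha, Finset.sum_insert ha, totalDegree_mul_of_isDomain
          (pow_ne_zero _ (hC0 a)) (Finset.prod_ne_zero_iff.2 fun i _ => pow_ne_zero _ (hC0 i)),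
          ih, hp _ (hC0 a)]
    exact hs _
  have hRdvd : ∀ a b, R ∣ jmin A B a b := by
    intro a b
    refine Fintype.prod_dvd_of_isRelPrime ?_ ?_
    · intro i j hij
      exact (hCcop i j hij).pow
    · intro i
      obtain ⟨s, t, hst, h⟩ := hdiv i
      exact jmin_dvd A B _ _ s t hst h a b
  have hconst : ∀ a b, ∃ c : ℂ, jmin A B a b = R * C c := by
    intro a b
    obtain ⟨N, hN⟩ := hRdvd a b
    by_cases hN0 : N = 0
    · exact ⟨0, by rw [hN, hN0, C_0]⟩
    have hh : (jmin A B a b).IsHomogeneous ((k - 1) + (k - 1)) :=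
      (hA.pderiv.mul hB.pderiv).sub (hA.pderiv.mul hB.pderiv)
    have h1 := hh.totalDegree_le
    rw [hN, totalDegree_mul_of_isDomain hR0 hN0] at h1
    have h2 : N.totalDegree = 0 := by omega
    exact ⟨coeff 0 N, by rw [hN, ← totalDegree_eq_zero_iff_eq_C.1 h2]⟩
  choose cc hcc using hconst
  let c : Fin 3 → ℂ := ![cc 1 2, cc 2 0, cc 0 1]
  have hc : c ≠ 0 := by
    intro hc
    have h0 : cc 1 2 = 0 := congrFun hc 0
    have h1 : cc 2 0 = 0 := congrFun hc 1
    have h2 : cc 0 1 = 0 := congrFun hc 2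
    have j0 := hcc 1 2
    have j1 := hcc 2 0
    have j2 := hcc 0 1
    rw [h0, C_0, mul_zero] at j0
    rw [h1, C_0, mul_zero] at j1
    rw [h2, C_0, mul_zero] at j2
    obtain ⟨a, b, hab⟩ := jmin_ne_zero hk hA hB hAB
    exact hab (jmin_all_zero j0 j1 j2 a b)
  have kA : ∑ i, C (c i) * pderiv i A = 0 := by
    apply mul_left_cancel₀ hR0
    have j0 := hcc 1 2
    have j1 := hcc 2 0
    have j2 := hcc 0 1
    rw [jmin] at j0 j1 j2
    simp only [Fin.sum_univ_three, c, Matrix.cons_val]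
    linear_combination -(pderiv 0 A) * j0 - (pderiv 1 A) * j1 - (pderiv 2 A) * j2
  have kB : ∑ i, C (c i) * pderiv i B = 0 := by
    apply mul_left_cancel₀ hR0
    have j0 := hcc 1 2
    have j1 := hcc 2 0
    have j2 := hcc 0 1
    rw [jmin] at j0 j1 j2
    simp only [Fin.sum_univ_three, c, Matrix.cons_val]
    linear_combination -(pderiv 0 B) * j0 - (pderiv 1 B) * j1 - (pderiv 2 B) * j2
  obtain ⟨S, hS, hSirr, -⟩ := hirr
  obtain ⟨p, hp⟩ := hS.nonempty
  refine not_irreducible_of_killed hk ((hA.C_mul p.1).add (hB.C_mul p.2)) c hc ?_ (hSirr p hp).2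
  simp only [map_add, pderiv_C_mul]
  rw [Fin.sum_univ_three] at kA kB ⊢
  linear_combination C p.1 * kA + C p.2 * kB
end
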